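/- Let t ≥ 1 and suppose V decomposes as an internal direct sum V = V_1 ⊕ ⋯ ⊕ V_t of subspaces which are pairwise B-orthogonal (B(v, w) = 0 whenever v ∈ V_i, w ∈ V_j with i ≠ j) and such that the restriction of B to each V_i is nondegenerate. Let g ∈ Sp(V, B) satisfy g(V_i) = V_i for all i, let g_i denote the restriction of g to V_i, and let o_i be the order of g_i. Assume that for every i: (1) the only g-invariant subspaces of V_i are 0 and V_i; (2) every orbit of the cyclic group generated by g_i on the nonzero vectors of V_i has exactly o_i elements; and (3) the orders o_1, …, o_t are pairwise distinct. Then every 2-subgroup P of Sp(V, B) satisfying g P g^{−1} = P is the trivial subgroup. -/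

import Mathlib

/-!
If a nonzero `g`-invariant subspace `U` contains `∑ xᵢ` with at least two nonzero components
`xᵢ ∈ Wᵢ`, then for suitable `i` the endomorphism `g ^ oᵢ - 1` kills `xᵢ` but not every component,
because the periods `oⱼ` are distinct. Iterating, `U` meets some `Wᵢ` nontrivially, hence contains
it by irreducibility. As `B` is nondegenerate on `Wᵢ`, no nonzero `g`-invariant subspace is totally
isotropic.

Let `F` be the space of vectors fixed by `P`. Since `g` normalizes `P`, it preserves `F` and `Fᗮ`,
hence also the totally isotropic space `F ⊓ Fᗮ`, which is therefore zero. Now `P` is a `p`-group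
acting on `Fᗮ` without nonzero fixed vectors, so `Fᗮ = 0` and `F = V`.
-/

open Function Module

theorem ncard_range_iterate {α : Type*} {f : α → α} {x : α} (hx : x ∈ periodicPts f) :
    (Set.range fun n ↦ f^[n] x).ncard = minimalPeriod f x := by
  have himage : (Set.range fun n ↦ f^[n] x) = (f^[·] x) '' Set.Iio (minimalPeriod f x) := by
    refine subset_antisymm ?_ (Set.image_subset_range _ _)
    rintro _ ⟨n, rfl⟩
    exact ⟨n % minimalPeriod f x, Nat.mod_lt _ (minimalPeriod_pos_of_mem_periodicPts hx),
      iterate_mod_minimalPeriod_eq⟩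
  rw [himage, iterate_injOn_Iio_minimalPeriod.ncard_image, Set.ncard_Iio_nat]

section InvariantSubmodules

variable {R M ι : Type*} [Ring R] [AddCommGroup M] [Module R M]
  {f : End R M} {W : ι → Submodule R M} {U : Submodule R M} {o : ι → ℕ}

theorem pow_sub_one_apply_eq_zero_iff {n : ℕ} {v : M} :
    (f ^ n - 1) v = 0 ↔ minimalPeriod f v ∣ n := by
  rw [LinearMap.sub_apply, End.one_apply, sub_eq_zero, End.pow_apply,
    ← isPeriodicPt_iff_minimalPeriod_dvd]
  rfl

theorem pow_sub_one_apply_mem (hU : U ∈ f.invtSubmodule) (n : ℕ) {v : M} (hv : v ∈ U) :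
    (f ^ n - 1) v ∈ U :=
  U.sub_mem (End.pow_apply_mem_of_forall_mem n hU v hv) hv

theorem exists_inf_ne_bot_of_finsupp_sum_mem (hW : ∀ i, W i ∈ f.invtSubmodule)
    (hperiod : ∀ i, ∀ v ∈ W i, v ≠ 0 → minimalPeriod f v = o i) (ho : Injective o)
    (hU : U ∈ f.invtSubmodule) {x : ι →₀ M} (hxW : ∀ i, x i ∈ W i) (hx : x ≠ 0)
    (hxU : (x.sum fun _ v ↦ v) ∈ U) : ∃ i, U ⊓ W i ≠ ⊥ := by
  induction hcard : x.support.card using Nat.strong_induction_on generalizing x with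
  | _ n ih =>
  subst hcard
  by_cases hsupp : (x.support : Set ι).Subsingleton
  · obtain ⟨i, hi⟩ := Finsupp.support_nonempty_iff.2 hx
    have hxi : x = Finsupp.single i (x i) :=
      Finsupp.eq_single_iff.2 ⟨fun j hj ↦ Finset.mem_singleton.2 (hsupp hj hi), rfl⟩
    rw [hxi, Finsupp.sum_single_index rfl] at hxU
    exact ⟨i, (Submodule.ne_bot_iff _).2 ⟨x i, ⟨hxU, hxW i⟩, Finsupp.mem_support_iff.1 hi⟩⟩
  · obtain ⟨i, hi, j, hj, hji⟩ : ∃ i ∈ x.support, ∃ j ∈ x.support, ¬ o j ∣ o i := by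
      obtain ⟨a, ha, b, hb, hab⟩ := Set.not_subsingleton_iff.1 hsupp
      by_cases hba : o b ∣ o a
      · exact ⟨b, hb, a, ha, fun h ↦ hab (ho (Nat.dvd_antisymm h hba))⟩
      · exact ⟨a, ha, b, hb, hba⟩
    have hminPeriod : ∀ k ∈ x.support, minimalPeriod f (x k) = o k := fun k hk ↦
      hperiod k _ (hxW k) (Finsupp.mem_support_iff.1 hk)
    let T : End R M := f ^ o i - 1
    let y : ι →₀ M := x.mapRange T (map_zero T)
    have hyi : y i = 0 := pow_sub_one_apply_eq_zero_iff.2 (hminPeriod i hi).dvd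
    have hyj : y j ≠ 0 := fun h ↦ hji (hminPeriod j hj ▸ pow_sub_one_apply_eq_zero_iff.1 h)
    have hsupport : y.support ⊂ x.support := (Finset.ssubset_iff_of_subset
      Finsupp.support_mapRange).2 ⟨i, hi, Finsupp.notMem_support_iff.2 hyi⟩
    have hsum : (y.sum fun _ v ↦ v) = T (x.sum fun _ v ↦ v) := by
      rw [Finsupp.sum_mapRange_index fun _ ↦ rfl, map_finsuppSum]
    exact ih _ (Finset.card_lt_card hsupport) (fun k ↦ pow_sub_one_apply_mem (hW k) _ (hxW k))
      (fun h ↦ hyj (DFunLike.congr_fun h j)) (hsum ▸ pow_sub_one_apply_mem hU _ hxU) rfl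

theorem exists_ne_bot_le_of_mem_invtSubmodule (htop : ⨆ i, W i = ⊤)
    (hW : ∀ i, W i ∈ f.invtSubmodule)
    (hirr : ∀ i, ∀ U ∈ f.invtSubmodule, U ≤ W i → U = ⊥ ∨ U = W i)
    (hperiod : ∀ i, ∀ v ∈ W i, v ≠ 0 → minimalPeriod f v = o i) (ho : Injective o)
    (hU : U ∈ f.invtSubmodule) (hU0 : U ≠ ⊥) : ∃ i, W i ≠ ⊥ ∧ W i ≤ U := by
  obtain ⟨u, huU, hu0⟩ := (Submodule.ne_bot_iff U).1 hU0
  obtain ⟨x, hxW, rfl⟩ :=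
    (Submodule.mem_iSup_iff_exists_finsupp W u).1 (htop ▸ Submodule.mem_top)
  have hx : x ≠ 0 := fun h ↦ hu0 (by rw [h, Finsupp.sum_zero_index])
  obtain ⟨i, hi⟩ := exists_inf_ne_bot_of_finsupp_sum_mem hW hperiod ho hU hxW hx huU
  have hinf : U ⊓ W i = W i :=
    (hirr i _ (End.invtSubmodule.inf_mem hU (hW i)) inf_le_right).resolve_left hi
  exact ⟨i, hinf ▸ hi, inf_eq_right.1 hinf⟩

theorem eq_bot_of_le_orthogonal_self {K V ι : Type*} [CommRing K] [AddCommGroup V] [Module K V]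
    {B : LinearMap.BilinForm K V} {f : End K V} {W : ι → Submodule K V} {U : Submodule K V}
    {o : ι → ℕ} (htop : ⨆ i, W i = ⊤) (hsep : ∀ i, (B.restrict (W i)).SeparatingLeft)
    (hW : ∀ i, W i ∈ f.invtSubmodule)
    (hirr : ∀ i, ∀ U ∈ f.invtSubmodule, U ≤ W i → U = ⊥ ∨ U = W i)
    (hperiod : ∀ i, ∀ v ∈ W i, v ≠ 0 → minimalPeriod f v = o i) (ho : Injective o)
    (hU : U ∈ f.invtSubmodule) (hiso : U ≤ B.orthogonal U) : U = ⊥ := by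
  by_contra hU0
  obtain ⟨i, hi, hiU⟩ := exists_ne_bot_le_of_mem_invtSubmodule htop hW hirr hperiod ho hU hU0
  obtain ⟨w, hw, hw0⟩ := (Submodule.ne_bot_iff _).1 hi
  have hw_left : ∀ z : W i, B.restrict (W i) ⟨w, hw⟩ z = 0 := fun z ↦
    hiso (hiU z.2) w (hiU hw)
  exact hw0 (congrArg Subtype.val (hsep i ⟨w, hw⟩ hw_left))

end InvariantSubmodules

theorem exists_fixed_ne_zero_of_isPGroup {G A : Type*} [Group G] [AddCommGroup A]
    [DistribMulAction G A] {p : ℕ} [Fact p.Prime] (hG : IsPGroup p G) {N : AddSubgroup A}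
    [Finite N] (hp : p ∣ Nat.card N) (hN : ∀ (g : G), ∀ v ∈ N, g • v ∈ N) :
    ∃ v ∈ N, v ≠ 0 ∧ ∀ g : G, g • v = v := by
  let S : SubMulAction G A := ⟨N, fun g {v} hv ↦ hN g v hv⟩
  have : Finite S := ‹Finite N›
  have hzero : (⟨0, N.zero_mem⟩ : S) ∈ MulAction.fixedPoints G S := fun g ↦
    Subtype.ext (smul_zero g)
  obtain ⟨v, hv, hv0⟩ := hG.exists_fixed_point_of_prime_dvd_card_of_fixed_point S hp hzero
  exact ⟨v, v.2, fun h ↦ hv0 (Subtype.ext h.symm), fun g ↦ congrArg Subtype.val (hv g)⟩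

theorem dvd_natCard_of_charP (K V : Type*) {p : ℕ} [Fact p.Prime] [Ring K] [CharP K p]
    [AddCommGroup V] [Module K V] [Nontrivial V] : p ∣ Nat.card V := by
  obtain ⟨v, hv⟩ := exists_ne (0 : V)
  have hpv : p • v = 0 := by rw [← Nat.cast_smul_eq_nsmul K, CharP.cast_eq_zero, zero_smul]
  exact addOrderOf_eq_prime hpv hv ▸ addOrderOf_dvd_natCard v

section FixedSubmodule

variable {K V : Type*} [CommRing K] [AddCommGroup V] [Module K V]
  {B : LinearMap.BilinForm K V} {P : Subgroup (V ≃ₗ[K] V)} {f : V ≃ₗ[K] V}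

/-- The submodule of vectors fixed by every element of a group `P` of linear automorphisms, realized
as the invariants of the tautological representation of `P`. The main argument compares it with its
orthogonal complement. -/
noncomputable def fixedSubmodule (P : Subgroup (V ≃ₗ[K] V)) : Submodule K V :=
  (Representation.ofDistribMulAction K P V).invariants

theorem mem_fixedSubmodule {v : V} : v ∈ fixedSubmodule P ↔ ∀ f ∈ P, f v = v :=
  Subtype.forall

theorem fixedSubmodule_mem_invtSubmodule (hf : f ∈ Subgroup.normalizer P) :
    fixedSubmodule P ∈ End.invtSubmodule (f : V →ₗ[K] V) := by
  intro v hv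
  refine mem_fixedSubmodule.2 fun h hh ↦ ?_
  have hconj : (f⁻¹ * h * f) v = v :=
    mem_fixedSubmodule.1 hv _ ((Subgroup.mem_normalizer_iff''.1 hf h).1 hh)
  calc h (f v) = (f * (f⁻¹ * h * f)) v := by rw [← mul_assoc, mul_inv_cancel_left]; rfl
    _ = f v := congrArg f hconj

theorem orthogonal_mem_invtSubmodule_of_isometry {U : Submodule K V}
    (hf : ∀ v w, B (f v) (f w) = B v w) (hU : U ∈ End.invtSubmodule (f.symm : V →ₗ[K] V)) :
    B.orthogonal U ∈ End.invtSubmodule (f : V →ₗ[K] V) := by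
  intro v hv u hu
  calc B u (f v) = B (f (f.symm u)) (f v) := by rw [f.apply_symm_apply]
    _ = B (f.symm u) v := hf _ _
    _ = 0 := hv _ (hU hu)

theorem orthogonal_fixedSubmodule_mem_invtSubmodule (hfP : f ∈ Subgroup.normalizer P)
    (hf : ∀ v w, B (f v) (f w) = B v w) :
    B.orthogonal (fixedSubmodule P) ∈ End.invtSubmodule (f : V →ₗ[K] V) :=
  orthogonal_mem_invtSubmodule_of_isometry hf (fixedSubmodule_mem_invtSubmodule (inv_mem hfP))

theorem eq_bot_of_fixedSubmodule_eq_top (h : fixedSubmodule P = ⊤) : P = ⊥ :=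
  (Subgroup.eq_bot_iff_forall P).2 fun f hf ↦
    LinearEquiv.ext fun _ ↦ mem_fixedSubmodule.1 (h ▸ Submodule.mem_top) f hf

theorem eq_bot_of_disjoint_fixedSubmodule [Finite V] {p : ℕ} [Fact p.Prime] [CharP K p]
    (hP : IsPGroup p P) {N : Submodule K V}
    (hN : ∀ f ∈ P, N ∈ End.invtSubmodule (f : V →ₗ[K] V))
    (hdisj : Disjoint (fixedSubmodule P) N) : N = ⊥ := by
  by_contra hN0
  have := Submodule.nontrivial_iff_ne_bot.2 hN0
  have : Finite N.toAddSubgroup := inferInstanceAs (Finite N)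
  obtain ⟨v, hvN, hv0, hfix⟩ := exists_fixed_ne_zero_of_isPGroup hP (N := N.toAddSubgroup)
    (dvd_natCard_of_charP K N) fun f _ hv ↦ hN f f.2 hv
  exact hv0 (Submodule.disjoint_def.1 hdisj v (mem_fixedSubmodule.2 fun f hf ↦ hfix ⟨f, hf⟩) hvN)

end FixedSubmodule

section Isometries

variable {p : ℕ} [Fact p.Prime] {K V : Type*} [Field K] [CharP K p] [AddCommGroup V] [Module K V]
  [Finite V] {B : LinearMap.BilinForm K V} {g : V ≃ₗ[K] V} {P : Subgroup (V ≃ₗ[K] V)}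

theorem eq_bot_of_forall_le_orthogonal_self_eq_bot (hB : B.IsRefl)
    (hg : ∀ v w, B (g v) (g w) = B v w)
    (hiso : ∀ U ∈ End.invtSubmodule (g : V →ₗ[K] V), U ≤ B.orthogonal U → U = ⊥)
    (hP : IsPGroup p P) (hPB : ∀ f ∈ P, ∀ v w, B (f v) (f w) = B v w)
    (hgP : g ∈ Subgroup.normalizer P) : P = ⊥ := by
  set F := fixedSubmodule P
  have hdisj : Disjoint F (B.orthogonal F) := by
    refine disjoint_iff.2 (hiso _ (End.invtSubmodule.inf_mem ?_ ?_) ?_)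
    · exact fixedSubmodule_mem_invtSubmodule hgP
    · exact orthogonal_fixedSubmodule_mem_invtSubmodule hgP hg
    · exact inf_le_right.trans (B.orthogonal_le inf_le_left)
  have hortho : B.orthogonal F = ⊥ := eq_bot_of_disjoint_fixedSubmodule hP
    (fun f hf ↦ orthogonal_fixedSubmodule_mem_invtSubmodule (P.le_normalizer hf) (hPB f hf)) hdisj
  have hcompl : IsCompl F (B.orthogonal F) :=
    (LinearMap.BilinForm.isCompl_orthogonal_iff_disjoint hB).2 hdisj
  exact eq_bot_of_fixedSubmodule_eq_top (eq_top_of_isCompl_bot (hortho ▸ hcompl))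

theorem stmt_15_general {ι : Type*} (hB : B.IsRefl) {W : ι → Submodule K V}
    (htop : ⨆ i, W i = ⊤) (hsep : ∀ i, (B.restrict (W i)).SeparatingLeft)
    (hg : ∀ v w, B (g v) (g w) = B v w)
    (hW : ∀ i, W i ∈ End.invtSubmodule (g : V →ₗ[K] V)) {o : ι → ℕ}
    (hirr : ∀ i, ∀ U ∈ End.invtSubmodule (g : V →ₗ[K] V), U ≤ W i → U = ⊥ ∨ U = W i)
    (hperiod : ∀ i, ∀ v ∈ W i, v ≠ 0 → minimalPeriod g v = o i) (ho : Injective o)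
    (hP : IsPGroup p P) (hPB : ∀ f ∈ P, ∀ v w, B (f v) (f w) = B v w)
    (hgP : g ∈ Subgroup.normalizer P) : P = ⊥ :=
  eq_bot_of_forall_le_orthogonal_self_eq_bot hB hg
    (fun _ ↦ eq_bot_of_le_orthogonal_self htop hsep hW hirr hperiod ho) hP hPB hgP

end Isometries

/-- Let `V` be a finite-dimensional `𝔽₂`-vector space with an alternating nondegenerate
bilinear form `B`, decomposed as an internal orthogonal direct sum `V = V₁ ⊕ ⋯ ⊕ V_t`
with `B` nondegenerate on each piece. Let `g` be a `B`-preserving automorphism stabilizing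
each `V_i`, whose restriction `g_i` to `V_i` has order `o i`; assume each `V_i` has no
proper nonzero `g`-invariant subspace, every orbit of `⟨g_i⟩` on nonzero vectors of `V_i`
has exactly `o i` elements, and the `o i` are pairwise distinct. Then any 2-subgroup `P`
of `Sp(V, B)` normalized by `g` is trivial. -/
theorem stmt_15 (V : Type*) [AddCommGroup V] [Module (ZMod 2) V]
    [FiniteDimensional (ZMod 2) V]
    (B : LinearMap.BilinForm (ZMod 2) V)
    (halt : ∀ v, B v v = 0) (hnd : B.Nondegenerate)
    (t : ℕ) (ht : 1 ≤ t) (W : Fin t → Submodule (ZMod 2) V)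
    (hinternal : DirectSum.IsInternal W)
    (horth : ∀ i j, i ≠ j → ∀ v ∈ W i, ∀ w ∈ W j, B v w = 0)
    (hndi : ∀ i, ∀ v ∈ W i, (∀ w ∈ W i, B v w = 0) → v = 0)
    (g : V ≃ₗ[ZMod 2] V) (hg : ∀ v w, B (g v) (g w) = B v w)
    (hgW : ∀ i, Submodule.map (g : V →ₗ[ZMod 2] V) (W i) = W i)
    (o : Fin t → ℕ)
    (ho : ∀ i, 0 < o i ∧ (∀ v ∈ W i, (g ^ o i) v = v) ∧
      ∀ m : ℕ, 0 < m → (∀ v ∈ W i, (g ^ m) v = v) → o i ≤ m)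
    (hirr : ∀ i, ∀ U : Submodule (ZMod 2) V, U ≤ W i → (∀ v ∈ U, g v ∈ U) →
      U = ⊥ ∨ U = W i)
    (horb : ∀ i, ∀ v ∈ W i, v ≠ 0 →
      Set.ncard {w : V | ∃ n : ℕ, (g ^ n) v = w} = o i)
    (hdist : Function.Injective o)
    (P : Subgroup (V ≃ₗ[ZMod 2] V)) (hP2 : IsPGroup 2 P)
    (hPSp : ∀ f ∈ P, ∀ v w, B (f v) (f w) = B v w)
    (hconj : ∀ f : V ≃ₗ[ZMod 2] V, f ∈ P ↔ g * f * g⁻¹ ∈ P) :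
    P = ⊥ := by
  have : Finite V := Module.finite_of_finite (ZMod 2)
  have hperiod : ∀ i, ∀ v ∈ W i, v ≠ 0 → minimalPeriod g v = o i := fun i v hv hv0 ↦ by
    have hperiodic : v ∈ periodicPts g :=
      mk_mem_periodicPts (ho i).1 ((LinearEquiv.pow_apply g _ v).symm.trans ((ho i).2.1 v hv))
    rw [← ncard_range_iterate hperiodic, ← horb i v hv hv0]
    simp only [LinearEquiv.pow_apply, Set.range]
  exact stmt_15_general (LinearMap.IsAlt.isRefl halt) hinternal.submodule_iSup_eq_top
    (fun i x hx ↦ Subtype.ext (hndi i x x.2 fun w hw ↦ hx ⟨w, hw⟩)) hg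
    (fun i ↦ (End.mem_invtSubmodule_iff_map_le _).2 (hgW i).le) (fun i U hU hUW ↦ hirr i U hUW hU)
    hperiod hdist hP2 hPSp (Subgroup.mem_normalizer_iff.2 hconj)
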